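/- Let u : ℝ³ → ℝ³ be a smooth vector field with div u = 0 on ℝ³, satisfying the Navier-slip boundary condition (u₃ = ∂₃u₁ = ∂₃u₂ = 0 at every point of ∂Ω) and such that (Δ curl u)₁ = (Δ curl u)₂ = 0 at every point of ∂Ω. Then ∂₃∂₃∂₃u₁ = 0 and ∂₃∂₃∂₃u₂ = 0 at every point of ∂Ω. -/

import Mathlib

noncomputable section

open MeasureTheory

/-- Points/vectors in ℝ³, indexed by `Fin 3` (so index `0,1,2` stand for coordinates `1,2,3`). -/
abbrev V3 : Type := Fin 3 → ℝ

/-- Partial derivative in the `i`-th coordinate direction. -/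
def pd (i : Fin 3) (f : V3 → ℝ) (x : V3) : ℝ := fderiv ℝ f x (Pi.single i 1)

/-- Divergence of a vector field. -/
def vdiv (u : V3 → V3) (x : V3) : ℝ :=
  pd 0 (fun y => u y 0) x + pd 1 (fun y => u y 1) x + pd 2 (fun y => u y 2) x

/-- Curl of a vector field. -/
def vcurl (u : V3 → V3) (x : V3) : V3 :=
  ![pd 1 (fun y => u y 2) x - pd 2 (fun y => u y 1) x,
    pd 2 (fun y => u y 0) x - pd 0 (fun y => u y 2) x,
    pd 0 (fun y => u y 1) x - pd 1 (fun y => u y 0) x]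

/-- Laplacian of a scalar function. -/
def lap (f : V3 → ℝ) (x : V3) : ℝ :=
  pd 0 (pd 0 f) x + pd 1 (pd 1 f) x + pd 2 (pd 2 f) x

/-- Componentwise Laplacian of a vector field. -/
def vlap (u : V3 → V3) (x : V3) : V3 := fun i => lap (fun y => u y i) x

/-- Advective derivative `(u·∇)V`. -/
def adv (u V : V3 → V3) (x : V3) : V3 := fun i =>
  u x 0 * pd 0 (fun y => V y i) x + u x 1 * pd 1 (fun y => V y i) x +
    u x 2 * pd 2 (fun y => V y i) x

/-- Cross product in ℝ³. -/
def cross (a b : V3) : V3 :=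
  ![a 1 * b 2 - a 2 * b 1, a 2 * b 0 - a 0 * b 2, a 0 * b 1 - a 1 * b 0]

/-- Dot product in ℝ³. -/
def dot (a b : V3) : ℝ := a 0 * b 0 + a 1 * b 1 + a 2 * b 2

/-- Gradient of a scalar function. -/
def grad (f : V3 → ℝ) (x : V3) : V3 := fun i => pd i f x

/-- The boundary `∂Ω = {x : x₃ = 0 or x₃ = 1}`. -/
def onBdry (x : V3) : Prop := x 2 = 0 ∨ x 2 = 1

/-- Horizontal periodicity (period 1 in x₁ and x₂) of a scalar function. -/
def hperS (f : V3 → ℝ) : Prop :=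
  (∀ x, f (x + Pi.single 0 1) = f x) ∧ (∀ x, f (x + Pi.single 1 1) = f x)

/-- Horizontal periodicity (period 1 in x₁ and x₂) of a vector field. -/
def hperV (u : V3 → V3) : Prop :=
  (∀ x, u (x + Pi.single 0 1) = u x) ∧ (∀ x, u (x + Pi.single 1 1) = u x)

/-- The unit cube `Q = [0,1]³`. -/
def Q3 : Set V3 := Set.Icc 0 1

/-!
Tangential derivatives of a function vanishing on a horizontal plane vanish there, so on the plane
the Laplacian of such a function is its second normal derivative.
Differentiating `div u` normally and using `∂₃u₁ = ∂₃u₂ = 0` gives `∂₃(div u) = ∂₃∂₃u₃`, hence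
`∂₃∂₃u₃ = 0` on the plane. Thus `u₃` enters the Laplacian of the tangential components
`∂₂u₃ - ∂₃u₂` and `∂₃u₁ - ∂₁u₃` of `curl u` only through tangential derivatives of `u₃` and
`∂₃∂₃u₃`, which vanish. What remains is `(Δ curl u)₁ = -∂₃∂₃∂₃u₂` and `(Δ curl u)₂ = ∂₃∂₃∂₃u₁`.
-/

section PartialDerivatives

variable {f g : V3 → ℝ}

lemma contDiff_pd {m n : WithTop ℕ∞} (i : Fin 3) (hf : ContDiff ℝ n f) (hmn : m + 1 ≤ n) :
    ContDiff ℝ m (pd i f) :=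
  (hf.fderiv_right hmn).clm_apply contDiff_const

lemma differentiable_pd (i : Fin 3) (hf : ContDiff ℝ 2 f) : Differentiable ℝ (pd i f) :=
  (contDiff_pd (m := 1) i hf (by norm_num)).differentiable one_ne_zero

lemma pd_add (i : Fin 3) (hf : Differentiable ℝ f) (hg : Differentiable ℝ g) :
    pd i (f + g) = pd i f + pd i g := by
  funext x
  simp [pd, fderiv_add (hf x) (hg x)]

lemma pd_sub (i : Fin 3) (hf : Differentiable ℝ f) (hg : Differentiable ℝ g) :
    pd i (f - g) = pd i f - pd i g := by
  funext x
  simp [pd, fderiv_sub (hf x) (hg x)]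

lemma pd_pd_eq_fderiv_fderiv (i j : Fin 3) {x : V3} (hf : DifferentiableAt ℝ (fderiv ℝ f) x) :
    pd i (pd j f) x = fderiv ℝ (fderiv ℝ f) x (Pi.single i 1) (Pi.single j 1) := by
  change fderiv ℝ (fun y => fderiv ℝ f y (Pi.single j 1)) x (Pi.single i 1) = _
  simp [fderiv_clm_apply hf (differentiableAt_const _)]

lemma pd_comm (i j : Fin 3) (hf : ContDiff ℝ 2 f) : pd i (pd j f) = pd j (pd i f) := by
  funext x
  have hf' : DifferentiableAt ℝ (fderiv ℝ f) x :=
    (hf.fderiv_right (m := 1) (by norm_num)).differentiable one_ne_zero x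
  rw [pd_pd_eq_fderiv_fderiv i j hf', pd_pd_eq_fderiv_fderiv j i hf']
  exact hf.contDiffAt.isSymmSndFDerivAt (by simp) _ _

lemma lap_sub (hf : ContDiff ℝ 2 f) (hg : ContDiff ℝ 2 g) : lap (f - g) = lap f - lap g := by
  have pd_pd_sub (i : Fin 3) : pd i (pd i (f - g)) = pd i (pd i f) - pd i (pd i g) := by
    rw [pd_sub i (hf.differentiable two_ne_zero) (hg.differentiable two_ne_zero),
      pd_sub i (differentiable_pd i hf) (differentiable_pd i hg)]
  funext x
  simp only [lap, pd_pd_sub, Pi.sub_apply]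
  ring

lemma pd_vdiv (i : Fin 3) {u : V3 → V3} (hu : ContDiff ℝ 2 u) :
    pd i (vdiv u) =
      pd 0 (pd i (u · 0)) + pd 1 (pd i (u · 1)) + pd 2 (pd i (u · 2)) := by
  have hu_apply (j : Fin 3) : ContDiff ℝ 2 (u · j) := contDiff_pi.1 hu j
  have hd (j : Fin 3) : Differentiable ℝ (pd j (u · j)) := differentiable_pd j (hu_apply j)
  change pd i (pd 0 (u · 0) + pd 1 (u · 1) + pd 2 (u · 2)) = _
  rw [pd_add i ((hd 0).add (hd 1)) (hd 2), pd_add i (hd 0) (hd 1), pd_comm i 0 (hu_apply 0),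
    pd_comm i 1 (hu_apply 1), pd_comm i 2 (hu_apply 2)]

end PartialDerivatives

section HorizontalPlane

variable {c : ℝ} {f : V3 → ℝ} {u : V3 → V3} {x : V3}

lemma pd_eq_zero_of_eq_zero_on_plane {i j : Fin 3} (hij : i ≠ j) (hf : DifferentiableAt ℝ f x)
    (hf0 : ∀ y, y j = c → f y = 0) (hx : x j = c) : pd i f x = 0 := by
  have hline : (fun t : ℝ => f (x + t • Pi.single i 1)) = fun _ => 0 := by
    funext t
    exact hf0 _ (by simp [hx, hij.symm])
  rw [pd, ← hf.lineDeriv_eq_fderiv, lineDeriv, hline, deriv_const]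

lemma lap_eq_pd_two_pd_two_of_eq_zero_on_plane (hf : ContDiff ℝ 2 f)
    (hf0 : ∀ y, y 2 = c → f y = 0) (hx : x 2 = c) : lap f x = pd 2 (pd 2 f) x := by
  have htan {i : Fin 3} (hi : i ≠ 2) : pd i (pd i f) x = 0 :=
    pd_eq_zero_of_eq_zero_on_plane hi (differentiable_pd i hf x)
      (fun y => pd_eq_zero_of_eq_zero_on_plane hi (hf.differentiable two_ne_zero y) hf0) hx
  rw [lap, htan (by decide : (0 : Fin 3) ≠ 2), htan (by decide : (1 : Fin 3) ≠ 2), zero_add,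
    zero_add]

lemma lap_pd_eq_zero_of_eq_zero_on_plane {i : Fin 3} (hi : i ≠ 2) (hf : ContDiff ℝ 3 f)
    (hf0 : ∀ y, y 2 = c → f y = 0) (hf2 : ∀ y, y 2 = c → pd 2 (pd 2 f) y = 0)
    (hx : x 2 = c) : lap (pd i f) x = 0 := by
  have hdf (j : Fin 3) : ContDiff ℝ 2 (pd j f) := contDiff_pd j hf (by norm_num)
  have hf' : ContDiff ℝ 2 f := hf.of_le (by norm_num)
  calc lap (pd i f) x = pd 2 (pd 2 (pd i f)) x :=
        lap_eq_pd_two_pd_two_of_eq_zero_on_plane (hdf i)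
          (fun y => pd_eq_zero_of_eq_zero_on_plane hi (hf'.differentiable two_ne_zero y) hf0) hx
    _ = pd i (pd 2 (pd 2 f)) x := by rw [pd_comm 2 i hf', pd_comm 2 i (hdf 2)]
    _ = 0 := pd_eq_zero_of_eq_zero_on_plane hi (differentiable_pd 2 (hdf 2) x) hf2 hx

lemma pd_two_vdiv_eq_pd_two_pd_two (hu : ContDiff ℝ 2 u)
    (hu₀ : ∀ y, y 2 = c → pd 2 (u · 0) y = 0) (hu₁ : ∀ y, y 2 = c → pd 2 (u · 1) y = 0)
    (hx : x 2 = c) : pd 2 (vdiv u) x = pd 2 (pd 2 (u · 2)) x := by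
  have hd (i : Fin 3) : Differentiable ℝ (pd 2 (u · i)) :=
    differentiable_pd 2 (contDiff_pi.1 hu i)
  simp only [pd_vdiv 2 hu, Pi.add_apply,
    pd_eq_zero_of_eq_zero_on_plane (by decide : (0 : Fin 3) ≠ 2) (hd 0 x) hu₀ hx,
    pd_eq_zero_of_eq_zero_on_plane (by decide : (1 : Fin 3) ≠ 2) (hd 1 x) hu₁ hx, zero_add]

lemma vlap_vcurl_apply_zero_of_plane (hu : ContDiff ℝ 3 u)
    (hu₂ : ∀ y, y 2 = c → u y 2 = 0) (hu₁ : ∀ y, y 2 = c → pd 2 (u · 1) y = 0)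
    (hu₂₂ : ∀ y, y 2 = c → pd 2 (pd 2 (u · 2)) y = 0) (hx : x 2 = c) :
    vlap (vcurl u) x 0 = -pd 2 (pd 2 (pd 2 (u · 1))) x := by
  have hdu (i j : Fin 3) : ContDiff ℝ 2 (pd i (u · j)) :=
    contDiff_pd i (contDiff_pi.1 hu j) (by norm_num)
  change lap (pd 1 (u · 2) - pd 2 (u · 1)) x = _
  rw [lap_sub (hdu 1 2) (hdu 2 1), Pi.sub_apply,
    lap_pd_eq_zero_of_eq_zero_on_plane (by decide) (contDiff_pi.1 hu 2) hu₂ hu₂₂ hx,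
    lap_eq_pd_two_pd_two_of_eq_zero_on_plane (hdu 2 1) hu₁ hx, zero_sub]

lemma vlap_vcurl_apply_one_of_plane (hu : ContDiff ℝ 3 u)
    (hu₂ : ∀ y, y 2 = c → u y 2 = 0) (hu₀ : ∀ y, y 2 = c → pd 2 (u · 0) y = 0)
    (hu₂₂ : ∀ y, y 2 = c → pd 2 (pd 2 (u · 2)) y = 0) (hx : x 2 = c) :
    vlap (vcurl u) x 1 = pd 2 (pd 2 (pd 2 (u · 0))) x := by
  have hdu (i j : Fin 3) : ContDiff ℝ 2 (pd i (u · j)) :=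
    contDiff_pd i (contDiff_pi.1 hu j) (by norm_num)
  change lap (pd 2 (u · 0) - pd 0 (u · 2)) x = _
  rw [lap_sub (hdu 2 0) (hdu 0 2), Pi.sub_apply,
    lap_pd_eq_zero_of_eq_zero_on_plane (by decide) (contDiff_pi.1 hu 2) hu₂ hu₂₂ hx,
    lap_eq_pd_two_pd_two_of_eq_zero_on_plane (hdu 2 0) hu₀ hx, sub_zero]

end HorizontalPlane

theorem stmt_4_general {u : V3 → V3} {c : ℝ} (hu : ContDiff ℝ 3 u)
    (hdivu : ∀ x, x 2 = c → pd 2 (vdiv u) x = 0)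
    (hubc : ∀ x, x 2 = c → u x 2 = 0 ∧ pd 2 (u · 0) x = 0 ∧ pd 2 (u · 1) x = 0)
    {x : V3} (hx : x 2 = c)
    (hlapcurlu : vlap (vcurl u) x 0 = 0 ∧ vlap (vcurl u) x 1 = 0) :
    pd 2 (pd 2 (pd 2 (u · 0))) x = 0 ∧ pd 2 (pd 2 (pd 2 (u · 1))) x = 0 := by
  have hu₂ (y : V3) (hy : y 2 = c) : u y 2 = 0 := (hubc y hy).1
  have hu₀ (y : V3) (hy : y 2 = c) : pd 2 (u · 0) y = 0 := (hubc y hy).2.1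
  have hu₁ (y : V3) (hy : y 2 = c) : pd 2 (u · 1) y = 0 := (hubc y hy).2.2
  have hu₂₂ (y : V3) (hy : y 2 = c) : pd 2 (pd 2 (u · 2)) y = 0 :=
    (pd_two_vdiv_eq_pd_two_pd_two (hu.of_le (by norm_num)) hu₀ hu₁ hy).symm.trans (hdivu y hy)
  rw [vlap_vcurl_apply_zero_of_plane hu hu₂ hu₁ hu₂₂ hx, neg_eq_zero,
    vlap_vcurl_apply_one_of_plane hu hu₂ hu₀ hu₂₂ hx] at hlapcurlu
  exact hlapcurlu.symm

/-- For divergence-free `u` with the Navier-slip b.c. and `(Δ curl u)₁ = (Δ curl u)₂ = 0`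
on `∂Ω`, it holds that `∂₃∂₃∂₃u₁ = ∂₃∂₃∂₃u₂ = 0` on `∂Ω`. -/
theorem stmt_4 (u : V3 → V3)
    (hu : ContDiff ℝ (⊤ : ℕ∞) u)
    (hdivu : ∀ x, vdiv u x = 0)
    (hubc : ∀ x, onBdry x →
      u x 2 = 0 ∧ pd 2 (fun y => u y 0) x = 0 ∧ pd 2 (fun y => u y 1) x = 0)
    (hlapcurlu : ∀ x, onBdry x →
      vlap (vcurl u) x 0 = 0 ∧ vlap (vcurl u) x 1 = 0) :
    ∀ x, onBdry x →
      pd 2 (pd 2 (pd 2 (fun y => u y 0))) x = 0 ∧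
      pd 2 (pd 2 (pd 2 (fun y => u y 1))) x = 0 := by
  have hpd_vdiv (x : V3) : pd 2 (vdiv u) x = 0 := by simp [pd, funext hdivu]
  exact fun x hx => stmt_4_general (contDiff_infty.1 hu 3) (fun y _ => hpd_vdiv y)
    (fun y hy => hubc y (by rwa [onBdry, hy])) rfl (hlapcurlu x hx)
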